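/- arXiv:1703.09904 — 3 statements merged into one kernel-verified Lean document; each statement's English description precedes it below -/
import Mathlib

section
/- Let 2 ≤ n ≤ l and let σ be a permutation of Fin n. Then the set Y_σ = {P : Fin n → Fin l | P(σ(1)) = P(σ(2)) ≤ P(σ(3)) ≤ … ≤ P(σ(n))} is an irreducible algebraic set. -/
/-- The solution set of the equation given by the pair (A, B) of nonempty subsets of `Fin n`:
points `P : Fin n → Fin l` with `min_{i ∈ A} P i = min_{j ∈ B} P j`. -/
def solutionSet {n : ℕ} (l : ℕ) (A B : Finset (Fin n)) (hA : A.Nonempty) (hB : B.Nonempty) :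
    Set (Fin n → Fin l) :=
  {P | A.inf' hA P = B.inf' hB P}

/-- A set of points is algebraic if it is the intersection of the solution sets of some
family of equations (pairs of nonempty subsets of `Fin n`). -/
def IsAlgebraicSet (n l : ℕ) (Y : Set (Fin n → Fin l)) : Prop :=
  ∃ (I : Type) (A B : I → Finset (Fin n)) (hA : ∀ i, (A i).Nonempty)
    (hB : ∀ i, (B i).Nonempty), Y = ⋂ i, solutionSet l (A i) (B i) (hA i) (hB i)

/-- An algebraic set `Y` is irreducible if whenever `Y = Y₁ ∪ … ∪ Yₘ` with each `Yᵢ`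
algebraic, then `Y = Yᵢ` for some `i`. -/
def IsIrreducibleAlg (n l : ℕ) (Y : Set (Fin n → Fin l)) : Prop :=
  ∀ (m : ℕ) (Z : Fin m → Set (Fin n → Fin l)),
    (∀ i, IsAlgebraicSet n l (Z i)) → Y = ⋃ i, Z i → ∃ i, Y = Z i

/-!
For a point `P`, let `C(P)` be the set of points `Q` with `P i ≤ P j → Q i ≤ Q j` for all `i`, `j`.
If `P` solves an equation `(A, B)` and attains its minimum over `A` at `a`, then `P a ≤ P b` for all
`b ∈ B`; these inequalities persist at every `Q ∈ C(P)`, so the minimum of `Q` over `A` is at most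
its minimum over `B`, and conversely. So `C(P)` lies in every algebraic set through `P`;
being itself algebraic, it is irreducible, since one member of a finite cover contains `P`. Finally
`Y_σ = C(P)` for the point `P` taking the values `0, 0, 1, …, n - 2` at `σ(1), …, σ(n)`.
-/

theorem inf'_le_inf'_of_forall_le_imp_le {ι α β : Type*} [LinearOrder α] [SemilatticeInf β]
    {f : ι → α} {g : ι → β} (hfg : ∀ i j, f i ≤ f j → g i ≤ g j) {A B : Finset ι}
    (hA : A.Nonempty) (hB : B.Nonempty) (hAB : A.inf' hA f ≤ B.inf' hB f) :
    A.inf' hA g ≤ B.inf' hB g := by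
  obtain ⟨a, ha, hfa⟩ := A.exists_mem_eq_inf' hA f
  refine Finset.le_inf' hB g fun b hb ↦ ?_
  have hab : f a ≤ f b := hfa ▸ hAB.trans (Finset.inf'_le f hb)
  exact (Finset.inf'_le g ha).trans (hfg a b hab)

section Algebraic

variable {n l : ℕ}

theorem mem_solutionSet_pair_singleton {i j : Fin n} {P : Fin n → Fin l} :
    P ∈ solutionSet l {i, j} {i} (Finset.insert_nonempty i {j}) (Finset.singleton_nonempty i) ↔
      P i ≤ P j := by
  simp [solutionSet, Finset.inf'_insert]

theorem isAlgebraicSet_setOf_forall_le (r : Fin n → Fin n → Prop) :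
    IsAlgebraicSet n l {P | ∀ i j, r i j → P i ≤ P j} := by
  refine ⟨{p : Fin n × Fin n // r p.1 p.2}, fun p ↦ {p.1.1, p.1.2}, fun p ↦ {p.1.1},
    fun p ↦ Finset.insert_nonempty _ _, fun p ↦ Finset.singleton_nonempty _, ?_⟩
  ext P
  simp only [Set.mem_iInter, mem_solutionSet_pair_singleton, Subtype.forall, Prod.forall,
    Set.mem_ofPred_eq]

theorem isIrreducibleAlg_of_forall_subset {Y : Set (Fin n → Fin l)} {P : Fin n → Fin l}
    (hP : P ∈ Y) (hY : ∀ Z, IsAlgebraicSet n l Z → P ∈ Z → Y ⊆ Z) : IsIrreducibleAlg n l Y := by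
  intro m Z hZ hYZ
  obtain ⟨i, hi⟩ := Set.mem_iUnion.1 (hYZ ▸ hP)
  exact ⟨i, (hY (Z i) (hZ i) hi).antisymm (hYZ ▸ Set.subset_iUnion Z i)⟩

/-- The closure of the point `P`, that is, the smallest algebraic set containing `P`: the points
satisfying every inequality between coordinates that holds at `P`. -/
def pointClosure (P : Fin n → Fin l) : Set (Fin n → Fin l) :=
  {Q | ∀ i j, P i ≤ P j → Q i ≤ Q j}

theorem mem_pointClosure_self (P : Fin n → Fin l) : P ∈ pointClosure P :=
  fun _ _ ↦ id

theorem isAlgebraicSet_pointClosure (P : Fin n → Fin l) : IsAlgebraicSet n l (pointClosure P) :=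
  isAlgebraicSet_setOf_forall_le fun i j ↦ P i ≤ P j

theorem IsAlgebraicSet.pointClosure_subset {Z : Set (Fin n → Fin l)} (hZ : IsAlgebraicSet n l Z)
    {P : Fin n → Fin l} (hP : P ∈ Z) : pointClosure P ⊆ Z := by
  obtain ⟨I, A, B, hA, hB, rfl⟩ := hZ
  refine fun Q hQ ↦ Set.mem_iInter.2 fun e ↦ ?_
  have hPe : (A e).inf' (hA e) P = (B e).inf' (hB e) P := Set.mem_iInter.1 hP e
  exact le_antisymm (inf'_le_inf'_of_forall_le_imp_le hQ (hA e) (hB e) hPe.le)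
    (inf'_le_inf'_of_forall_le_imp_le hQ (hB e) (hA e) hPe.ge)

theorem isIrreducibleAlg_pointClosure (P : Fin n → Fin l) :
    IsIrreducibleAlg n l (pointClosure P) :=
  isIrreducibleAlg_of_forall_subset (mem_pointClosure_self P) fun _ hZ ↦ hZ.pointClosure_subset

end Algebraic

section Chain

variable {n l : ℕ} (hn : 2 ≤ n) (hnl : n ≤ l + 1) (σ : Equiv.Perm (Fin n))

/-- The generic point of `Y_σ`, with values `0, 0, 1, …, n - 2` at `σ 0, σ 1, σ 2, …, σ (n - 1)`;
the truncated subtraction makes the first two values agree. -/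
def chainPoint : Fin n → Fin l :=
  fun k ↦ ⟨(σ.symm k : ℕ) - 1, by omega⟩

theorem chainPoint_apply_le_iff [NeZero n] {i j : Fin n} :
    chainPoint hn hnl σ (σ i) ≤ chainPoint hn hnl σ (σ j) ↔ i ≤ j ∨ i = 1 ∧ j = 0 := by
  have val_one : ((1 : Fin n) : ℕ) = 1 := by rw [Fin.val_one', Nat.mod_eq_of_lt hn]
  simp only [chainPoint, Equiv.symm_apply_apply, Fin.le_def, Fin.ext_iff, val_one, Fin.val_zero]
  omega

theorem pointClosure_chainPoint [NeZero n] :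
    pointClosure (chainPoint hn hnl σ) =
      {P : Fin n → Fin l | P (σ 0) = P (σ 1) ∧ Monotone fun i => P (σ i)} := by
  ext P
  have mem_iff : P ∈ pointClosure (chainPoint hn hnl σ) ↔
      ∀ i j, i ≤ j ∨ i = 1 ∧ j = 0 → P (σ i) ≤ P (σ j) := by
    simp only [← chainPoint_apply_le_iff hn hnl σ]
    exact σ.surjective.forall₂
  rw [mem_iff]
  constructor
  · intro hP
    exact ⟨le_antisymm (hP 0 1 (.inl (Fin.zero_le _))) (hP 1 0 (.inr ⟨rfl, rfl⟩)),
      fun i j hij ↦ hP i j (.inl hij)⟩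
  · rintro ⟨heq, hmono⟩ i j (hij | ⟨rfl, rfl⟩)
    · exact hmono hij
    · exact heq.ge

end Chain

theorem stmt_5_general (n l : ℕ) [NeZero n] (hn : 2 ≤ n) (hnl : n ≤ l + 1)
    (σ : Equiv.Perm (Fin n)) :
    IsAlgebraicSet n l
      {P : Fin n → Fin l | P (σ 0) = P (σ 1) ∧ Monotone fun i => P (σ i)} ∧
    IsIrreducibleAlg n l
      {P : Fin n → Fin l | P (σ 0) = P (σ 1) ∧ Monotone fun i => P (σ i)} := by
  rw [← pointClosure_chainPoint hn hnl σ]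
  exact ⟨isAlgebraicSet_pointClosure _, isIrreducibleAlg_pointClosure _⟩

/-- Let 2 ≤ n ≤ l and let σ be a permutation of `Fin n`. Then the set
`Y_σ = {P : Fin n → Fin l | P(σ(1)) = P(σ(2)) ≤ P(σ(3)) ≤ … ≤ P(σ(n))}` is an irreducible
algebraic set.  (Positions 1 and 2 are the indices `0, 1 : Fin n`; since the chain of
inequalities is equivalent to monotonicity of `P ∘ σ`, the set is
`{P | P (σ 0) = P (σ 1) ∧ Monotone (fun i => P (σ i))}`.) -/
theorem stmt_5 (n l : ℕ) [NeZero n] (hn : 2 ≤ n) (hnl : n ≤ l) (σ : Equiv.Perm (Fin n)) :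
    IsAlgebraicSet n l
      {P : Fin n → Fin l | P (σ 0) = P (σ 1) ∧ Monotone fun i => P (σ i)} ∧
    IsIrreducibleAlg n l
      {P : Fin n → Fin l | P (σ 0) = P (σ 1) ∧ Monotone fun i => P (σ i)} :=
  stmt_5_general n l hn (Nat.le_succ_of_le hnl) σ
end

section
/- Let 1 ≤ n ≤ l, let (A, B) be a pair of nonempty subsets of Fin n with A ∪ B = Fin n, and let σ be a permutation of Fin n of the first or second kind with respect to (A, B). Define the point P_σ : Fin n → Fin l by P_σ(σ(i)) = a_i for all i if σ is of the first kind, and by P_σ(σ(1)) = a_2 and P_σ(σ(i)) = a_i for 2 ≤ i ≤ n if σ is of the second kind. Then P_σ ∈ Y_σ, and P_σ ∉ Y_{σ′} for every permutation σ′ ≠ σ of the first or second kind. -/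
/-- The set `Y_σ` for a permutation σ of the first kind:
`{P | P(σ(1)) ≤ P(σ(2)) ≤ … ≤ P(σ(n))}`. -/
def chainSet (n l : ℕ) (σ : Equiv.Perm (Fin n)) : Set (Fin n → Fin l) :=
  {P | Monotone fun i => P (σ i)}

/-- The set `Y_σ` for a permutation σ of the second kind:
`{P | P(σ(1)) = P(σ(2)) ≤ P(σ(3)) ≤ … ≤ P(σ(n))}`. -/
def eqChainSet (n l : ℕ) [NeZero n] (σ : Equiv.Perm (Fin n)) : Set (Fin n → Fin l) :=
  {P | P (σ 0) = P (σ 1) ∧ Monotone fun i => P (σ i)}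

/-- The set `Y_σ` attached to a permutation σ (of the first or second kind) with respect to
the equation (A, B): the chain set if σ is of the first kind (`σ(1) ∈ A ∩ B`), and the
equality-chain set otherwise. -/
def permSet (n l : ℕ) [NeZero n] (A B : Finset (Fin n)) (σ : Equiv.Perm (Fin n)) :
    Set (Fin n → Fin l) :=
  if σ 0 ∈ A ∩ B then chainSet n l σ else eqChainSet n l σ

/-!
Along `σ` the point `P_σ` is sorted, and every `Y_σ'` consists of points sorted along `σ'`. A tuple
has only one sorted rearrangement, so `P_σ ∈ Y_σ'` forces `P_σ ∘ σ' = P_σ ∘ σ`. When `σ` is of the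
first kind `P_σ` is injective, hence `σ' = σ`. When `σ` is of the second kind the only coincidence
among the values of `P_σ` is `P_σ(σ(1)) = P_σ(σ(2))`, and `σ'(1) = σ(2)` is impossible because
`σ'(1) ∈ B` while `σ(2) ∉ B`.
-/

section

variable {ι α : Type*} {f : ι → α} {σ τ : Equiv.Perm ι}

theorem perm_eq_of_comp_eq_of_injOn_compl {x y : ι} (hf : Set.InjOn (f ∘ σ) {x}ᶜ)
    (hyx : y ≠ x) (hxy : f (σ x) = f (σ y)) (hτ : τ x ≠ σ y) (hcomp : f ∘ τ = f ∘ σ) :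
    τ = σ := by
  have hf' : Set.InjOn f {σ x}ᶜ := by
    simpa only [Set.image_compl_eq σ.bijective, Set.image_singleton] using hf.image_of_comp
  have hτx : τ x = σ x := by
    by_contra hne
    exact hτ (hf' hne (σ.injective.ne hyx) ((congrFun hcomp x).trans hxy))
  ext1 i
  rcases eq_or_ne i x with rfl | hi
  · exact hτx
  · exact hf' (hτx ▸ τ.injective.ne hi) (σ.injective.ne hi) (congrFun hcomp i)

end

section

variable {n l : ℕ} [NeZero n]

theorem monotone_of_monotoneOn_Ici_one {α : Type*} [Preorder α] {g : Fin n → α}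
    (h01 : g 0 = g 1) (hg : MonotoneOn g (Set.Ici 1)) : Monotone g := by
  have hsup (i : Fin n) : g (i ⊔ 1) = g i := by
    rcases eq_or_ne i 0 with rfl | hi
    · rw [sup_eq_right.2 (Fin.zero_le 1), h01]
    · rw [sup_eq_left.2 (Fin.one_le_of_ne_zero hi)]
  intro i j hij
  rw [← hsup i, ← hsup j]
  exact hg (Set.mem_Ici.2 le_sup_right) (Set.mem_Ici.2 le_sup_right) (sup_le_sup_right hij 1)

variable {A B : Finset (Fin n)} {σ : Equiv.Perm (Fin n)} {P : Fin n → Fin l}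

theorem permSet_subset_chainSet : permSet n l A B σ ⊆ chainSet n l σ := by
  intro P hP
  unfold permSet at hP
  split_ifs at hP
  exacts [hP, hP.2]

theorem permSet_eq_chainSet (hσ : σ 0 ∈ A ∩ B) : permSet n l A B σ = chainSet n l σ :=
  if_pos hσ

theorem permSet_eq_eqChainSet (hσ : σ 0 ∉ A) : permSet n l A B σ = eqChainSet n l σ :=
  if_neg fun h => hσ (Finset.mem_inter.1 h).1

theorem mem_permSet_iff_of_strictMono {τ : Equiv.Perm (Fin n)} (hσ : σ 0 ∈ A ∩ B)
    (hP : StrictMono (P ∘ σ)) : P ∈ permSet n l A B τ ↔ τ = σ := by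
  constructor
  · intro hmem
    have hcomp : P ∘ τ = P ∘ σ :=
      Tuple.unique_monotone (permSet_subset_chainSet hmem) hP.monotone
    have hinj : Function.Injective P := (σ.injective_comp P).1 hP.injective
    exact DFunLike.coe_injective (hinj.comp_left hcomp)
  · rintro rfl
    rw [permSet_eq_chainSet hσ]
    exact hP.monotone

theorem mem_permSet_iff_of_strictMonoOn {τ : Equiv.Perm (Fin n)} (hσ : σ 0 ∈ B \ A)
    (hσ1 : σ 1 ∉ B) (hτ : τ 0 ∈ B) (h01 : P (σ 0) = P (σ 1))
    (hP : StrictMonoOn (P ∘ σ) {0}ᶜ) : P ∈ permSet n l A B τ ↔ τ = σ := by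
  rw [Finset.mem_sdiff] at hσ
  have h10 : (1 : Fin n) ≠ 0 := fun h => hσ1 (h ▸ hσ.1)
  have hIci : Set.Ici (1 : Fin n) ⊆ {0}ᶜ := by
    rintro _ hi rfl
    exact h10 (le_antisymm hi (Fin.zero_le 1))
  have hmono : Monotone (P ∘ σ) := monotone_of_monotoneOn_Ici_one h01 (hP.monotoneOn.mono hIci)
  constructor
  · intro hmem
    have hcomp : P ∘ τ = P ∘ σ := Tuple.unique_monotone (permSet_subset_chainSet hmem) hmono
    exact perm_eq_of_comp_eq_of_injOn_compl hP.injOn h10 h01 (ne_of_mem_of_not_mem hτ hσ1) hcomp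
  · rintro rfl
    rw [permSet_eq_eqChainSet hσ.2]
    exact ⟨h01, hmono⟩

theorem stmt_8_general {a : Fin n → Fin l} (ha : StrictMono a)
    (hP : (σ 0 ∈ A ∩ B ∧ ∀ i : Fin n, P (σ i) = a i) ∨
          (σ 0 ∈ B \ A ∧ σ 1 ∈ A \ B ∧ P (σ 0) = P (σ 1) ∧
            ∀ i : Fin n, i ≠ 0 → P (σ i) = a i)) :
    P ∈ permSet n l A B σ ∧
    ∀ σ' : Equiv.Perm (Fin n), σ' ≠ σ →
      (σ' 0 ∈ A ∩ B ∨ (σ' 0 ∈ B \ A ∧ σ' 1 ∈ A \ B)) →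
      P ∉ permSet n l A B σ' := by
  rcases hP with ⟨hσ, hP⟩ | ⟨hσ, hσ1, h01, hP⟩
  · have hstrict : StrictMono (P ∘ σ) := (funext hP : P ∘ σ = a) ▸ ha
    have hiff {τ : Equiv.Perm (Fin n)} : P ∈ permSet n l A B τ ↔ τ = σ :=
      mem_permSet_iff_of_strictMono hσ hstrict
    exact ⟨hiff.2 rfl, fun σ' hne _ => hne ∘ hiff.1⟩
  · have hstrict : StrictMonoOn (P ∘ σ) {0}ᶜ :=
      (ha.strictMonoOn _).congr fun i hi => (hP i hi).symm
    have hiff {τ : Equiv.Perm (Fin n)} (hτ : τ 0 ∈ B) : P ∈ permSet n l A B τ ↔ τ = σ :=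
      mem_permSet_iff_of_strictMonoOn hσ (Finset.mem_sdiff.1 hσ1).2 hτ h01 hstrict
    refine ⟨(hiff (Finset.mem_sdiff.1 hσ).1).2 rfl, fun σ' hne hσ' => hne ∘ (hiff ?_).1⟩
    exact hσ'.elim (fun h => (Finset.mem_inter.1 h).2) (fun h => (Finset.mem_sdiff.1 h.1).1)

end

/-- Let 1 ≤ n ≤ l, let (A, B) be a pair of nonempty subsets of `Fin n` with
`A ∪ B = Fin n`, and let σ be a permutation of `Fin n` of the first or second kind with
respect to (A, B). Define the point `P_σ : Fin n → Fin l` by `P_σ(σ(i)) = a_i` for all i if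
σ is of the first kind, and by `P_σ(σ(1)) = a_2` and `P_σ(σ(i)) = a_i` for 2 ≤ i ≤ n if σ is
of the second kind. Then `P_σ ∈ Y_σ`, and `P_σ ∉ Y_σ′` for every permutation σ′ ≠ σ of the
first or second kind.
(Position i ∈ {1,…,n} is the index `i−1 : Fin n`, and `a_i`, the i-th smallest element of
`Fin l`, is `Fin.castLE hnl (i−1)`; so the defining conditions read
`P (σ j) = Fin.castLE hnl j` for all j in the first case, and `P (σ 0) = P (σ 1)` together
with `P (σ j) = Fin.castLE hnl j` for all `j ≠ 0` in the second case.) -/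
theorem stmt_8 (n l : ℕ) [NeZero n] (hn : 1 ≤ n) (hnl : n ≤ l) (A B : Finset (Fin n))
    (hA : A.Nonempty) (hB : B.Nonempty) (hAB : A ∪ B = Finset.univ)
    (σ : Equiv.Perm (Fin n)) (P : Fin n → Fin l)
    (hP : (σ 0 ∈ A ∩ B ∧ ∀ i : Fin n, P (σ i) = Fin.castLE hnl i) ∨
          (σ 0 ∈ B \ A ∧ σ 1 ∈ A \ B ∧ P (σ 0) = P (σ 1) ∧
            ∀ i : Fin n, i ≠ 0 → P (σ i) = Fin.castLE hnl i)) :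
    P ∈ permSet n l A B σ ∧
    ∀ σ' : Equiv.Perm (Fin n), σ' ≠ σ →
      (σ' 0 ∈ A ∩ B ∨ (σ' 0 ∈ B \ A ∧ σ' 1 ∈ A \ B)) →
      P ∉ permSet n l A B σ' :=
  stmt_8_general (Fin.strictMono_castLE hnl) hP
end

section
/- Let 2 ≤ n ≤ l. For each pair (A, B) of nonempty subsets of Fin n with A ∪ B = Fin n, let Irr(A,B) denote the number of irreducible components of the solution set V(A,B) ⊆ (Fin n → Fin l), i.e. the number m of irreducible algebraic sets Y_1, …, Y_m, pairwise not contained in one another, whose union is V(A,B). Then the sum of Irr(A,B) over all such pairs (A, B) equals 4 · n! · 3^{n−2}; consequently, since there are exactly 3^n − 2 such pairs, the average number of irreducible components over all equations in n variables is 4 · n! · 3^{n−2} / (3^n − 2), independently of l. -/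
/-- The set of equations in n variables in which every variable occurs: ordered pairs
(A, B) of nonempty subsets of `Fin n` with `A ∪ B = Fin n`. -/
def equationsFinset (n : ℕ) : Finset (Finset (Fin n) × Finset (Fin n)) :=
  Finset.univ.filter (fun p => p.1.Nonempty ∧ p.2.Nonempty ∧ p.1 ∪ p.2 = Finset.univ)

/-!
The set of all points whose weak order coarsens that of a point `P` is the smallest algebraic set
containing `P`, so these sets are irreducible. A point lies in `V(A, B)` exactly when its minimum is
attained both on `A` and on `B`; refining its weak order as far as this allows, one either reaches a
linear order whose first variable lies in `A ∩ B`, or one in which only the first two variables are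
tied, the first in `A \ B` and the second in `B \ A`. The components of `V(A, B)` thus correspond
to enumerations `σ` of the variables, and the sum over all equations is computed by exchanging it
with the sum over `σ`: for a fixed `σ` there are `3 ^ (n - 1)` equations of the first kind and
`3 ^ (n - 2)` of the second.
-/

open Finset Equiv

section IrreducibleDecomposition

variable {n l : ℕ}

lemma IsAlgebraicSet.inter {Y Z : Set (Fin n → Fin l)} (hY : IsAlgebraicSet n l Y)
    (hZ : IsAlgebraicSet n l Z) : IsAlgebraicSet n l (Y ∩ Z) := by
  obtain ⟨I, A, B, hA, hB, rfl⟩ := hY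
  obtain ⟨J, C, D, hC, hD, rfl⟩ := hZ
  refine ⟨I ⊕ J, Sum.elim A C, Sum.elim B D, Sum.rec hA hC, Sum.rec hB hD, ?_⟩
  rw [Set.iInter_sum]
  rfl

lemma IsIrreducibleAlg.exists_subset_of_subset_iUnion {κ : Type*} [Finite κ]
    {Y : Set (Fin n → Fin l)} {Z : κ → Set (Fin n → Fin l)} (hirr : IsIrreducibleAlg n l Y)
    (hY : IsAlgebraicSet n l Y) (hZ : ∀ k, IsAlgebraicSet n l (Z k)) (hYZ : Y ⊆ ⋃ k, Z k) :
    ∃ k, Y ⊆ Z k := by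
  obtain ⟨m, ⟨e⟩⟩ := Finite.exists_equiv_fin κ
  have hcover : Y = ⋃ i, Y ∩ Z (e.symm i) := by
    rw [← Set.inter_iUnion, e.symm.surjective.iUnion_comp, Set.inter_eq_left.2 hYZ]
  obtain ⟨i, hi⟩ := hirr m _ (fun i => hY.inter (hZ (e.symm i))) hcover
  exact ⟨e.symm i, Set.inter_eq_left.1 hi.symm⟩

/-- The family `Y` consists of the irreducible components of `V`: irreducible algebraic sets,
pairwise not contained in one another, with union `V`. -/
structure IsIrreducibleDecomposition {ι : Type*} (Y : ι → Set (Fin n → Fin l))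
    (V : Set (Fin n → Fin l)) : Prop where
  isAlgebraicSet (i : ι) : IsAlgebraicSet n l (Y i)
  isIrreducibleAlg (i : ι) : IsIrreducibleAlg n l (Y i)
  not_subset : Pairwise fun i j => ¬ Y i ⊆ Y j
  iUnion_eq : ⋃ i, Y i = V

namespace IsIrreducibleDecomposition

variable {ι κ : Type*} {Y : ι → Set (Fin n → Fin l)} {Z : κ → Set (Fin n → Fin l)}
  {V : Set (Fin n → Fin l)}

lemma eq_of_subset (hY : IsIrreducibleDecomposition Y V) {i j : ι} (hij : Y i ⊆ Y j) : i = j :=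
  not_imp_comm.1 (@hY.not_subset i j) (not_not.2 hij)

lemma exists_subset [Finite κ] (hY : IsIrreducibleDecomposition Y V)
    (hZ : IsIrreducibleDecomposition Z V) (i : ι) : ∃ k, Y i ⊆ Z k :=
  (hY.isIrreducibleAlg i).exists_subset_of_subset_iUnion (hY.isAlgebraicSet i) hZ.isAlgebraicSet <|
    by rw [hZ.iUnion_eq, ← hY.iUnion_eq]; exact Set.subset_iUnion Y i

theorem natCard_eq [Finite ι] [Finite κ] (hY : IsIrreducibleDecomposition Y V)
    (hZ : IsIrreducibleDecomposition Z V) : Nat.card ι = Nat.card κ := by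
  choose f hf using hY.exists_subset hZ
  choose g hg using hZ.exists_subset hY
  exact Nat.card_congr ⟨f, g, fun i => (hY.eq_of_subset ((hf i).trans (hg (f i)))).symm,
    fun k => (hZ.eq_of_subset ((hg k).trans (hf (g k)))).symm⟩

end IsIrreducibleDecomposition

end IrreducibleDecomposition

section Coarsenings

variable {α β γ κ : Type*}

/-- The `β`-valued points on `α` whose weak order coarsens that of `f`. The values of `f` may lie in
a different order `γ`, so that a weak order can be presented by any ranking of `α`. -/
def coarsenings [LE β] [LE γ] (f : α → γ) : Set (α → β) :=
  {Q | ∀ i j, f i ≤ f j → Q i ≤ Q j}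

lemma coarsenings_subset_coarsenings_iff [LE β] [LE γ] [LE κ] (e : γ ↪o β) {f : α → γ}
    {g : α → κ} :
    (coarsenings f : Set (α → β)) ⊆ coarsenings g ↔ f ∈ coarsenings g := by
  refine ⟨fun h i j hij => ?_, fun h Q hQ i j hij => hQ i j (h i j hij)⟩
  have hef : e ∘ f ∈ coarsenings f := fun _ _ => e.map_rel_iff.2
  exact e.map_rel_iff.1 (h hef i j hij)

lemma inf'_le_inf'_of_mem_coarsenings [SemilatticeInf β] [LinearOrder γ] {f : α → γ}
    {Q : α → β} (hQ : Q ∈ coarsenings f) {A B : Finset α} (hA : A.Nonempty) (hB : B.Nonempty)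
    (h : A.inf' hA f ≤ B.inf' hB f) : A.inf' hA Q ≤ B.inf' hB Q := by
  obtain ⟨a, ha, hfa⟩ := A.exists_mem_eq_inf' hA f
  exact le_inf' _ _ fun b hb =>
    (inf'_le Q ha).trans (hQ a b (hfa ▸ h.trans (inf'_le f hb)))

lemma mem_coarsenings_comp_symm_iff [LE β] [LE γ] (σ : κ ≃ α) {g : κ → γ} {Q : α → β} :
    Q ∈ coarsenings (g ∘ σ.symm) ↔ Q ∘ σ ∈ coarsenings g :=
  ⟨fun h i j hij => h (σ i) (σ j) (by simpa using hij), fun h i j hij => by simpa using h _ _ hij⟩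

lemma mem_coarsenings_symm_iff [Preorder β] [Preorder γ] (σ : γ ≃ α) {Q : α → β} :
    Q ∈ coarsenings σ.symm ↔ Monotone (Q ∘ σ) :=
  mem_coarsenings_comp_symm_iff σ (g := id)

lemma mem_coarsenings_max_one_iff {m : ℕ} [PartialOrder β] {Q : Fin (m + 2) → β} :
    Q ∈ coarsenings (max · (1 : Fin (m + 2))) ↔ Monotone Q ∧ Q 0 = Q 1 := by
  constructor
  · exact fun h => ⟨fun i j hij => h i j (max_le_max_right 1 hij),
      (h 0 1 (by simp)).antisymm (h 1 0 (by simp))⟩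
  · rintro ⟨hmono, h01⟩ i j hij
    have hmax : Q (max j 1) = Q j := by
      rcases eq_or_ne j 0 with rfl | hj
      · simpa using h01.symm
      · rw [max_eq_left (Fin.one_le_of_ne_zero hj)]
    calc Q i ≤ Q (max j 1) := hmono ((le_max_left i 1).trans hij)
      _ = Q j := hmax

lemma mem_coarsenings_max_one_symm_iff {m : ℕ} [PartialOrder β] (σ : Fin (m + 2) ≃ α) {Q : α → β} :
    Q ∈ coarsenings ((max · 1) ∘ σ.symm) ↔ Monotone (Q ∘ σ) ∧ Q (σ 0) = Q (σ 1) :=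
  (mem_coarsenings_comp_symm_iff σ).trans mem_coarsenings_max_one_iff

end Coarsenings

section AlgebraicCoarsenings

variable {n l : ℕ}

lemma isAlgebraicSet_coarsenings {γ : Type*} [LE γ] (f : Fin n → γ) :
    IsAlgebraicSet n l (coarsenings f) := by
  refine ⟨{p : Fin n × Fin n // f p.1 ≤ f p.2}, fun p => {p.1.1}, fun p => {p.1.1, p.1.2},
    fun p => by simp, fun p => by simp, ?_⟩
  ext Q
  simp [coarsenings, solutionSet]

lemma IsAlgebraicSet.coarsenings_subset {Z : Set (Fin n → Fin l)} (hZ : IsAlgebraicSet n l Z)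
    {P : Fin n → Fin l} (hP : P ∈ Z) : coarsenings P ⊆ Z := by
  obtain ⟨I, A, B, hA, hB, rfl⟩ := hZ
  intro Q hQ
  rw [Set.mem_iInter] at hP ⊢
  exact fun i => le_antisymm
    (inf'_le_inf'_of_mem_coarsenings hQ (hA i) (hB i) (hP i).le)
    (inf'_le_inf'_of_mem_coarsenings hQ (hB i) (hA i) (hP i).ge)

lemma isIrreducibleAlg_coarsenings {γ : Type*} [LE γ] (e : γ ↪o Fin l) (f : Fin n → γ) :
    IsIrreducibleAlg n l (coarsenings f) := by
  intro m Z hZ hcover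
  have hgeneric : e ∘ f ∈ ⋃ i, Z i := hcover ▸ fun _ _ => e.map_rel_iff.2
  obtain ⟨i, hi⟩ := Set.mem_iUnion.1 hgeneric
  refine ⟨i, Set.Subset.antisymm (fun Q hQ => ?_) (hcover ▸ Set.subset_iUnion Z i)⟩
  exact (hZ i).coarsenings_subset hi fun j k hjk => hQ j k (e.map_rel_iff.1 hjk)

lemma mem_solutionSet_iff_exists_forall_le {A B : Finset (Fin n)} {hA : A.Nonempty}
    {hB : B.Nonempty} (hAB : A ∪ B = univ) {P : Fin n → Fin l} :
    P ∈ solutionSet l A B hA hB ↔ ∃ a ∈ A, ∃ b ∈ B, (∀ i, P a ≤ P i) ∧ ∀ i, P b ≤ P i := by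
  constructor
  · intro (h : A.inf' hA P = B.inf' hB P)
    obtain ⟨a, ha, hPa⟩ := A.exists_mem_eq_inf' hA P
    obtain ⟨b, hb, hPb⟩ := B.exists_mem_eq_inf' hB P
    have hab : P a = P b := by rw [← hPa, ← hPb, h]
    have hmin (i : Fin n) : P a ≤ P i := by
      rcases mem_union.1 (hAB ▸ mem_univ i) with hi | hi
      · exact hPa ▸ inf'_le P hi
      · exact hab ▸ hPb ▸ inf'_le P hi
    exact ⟨a, ha, b, hb, hmin, hab ▸ hmin⟩
  · rintro ⟨a, ha, b, hb, hPa, hPb⟩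
    exact le_antisymm (le_inf' _ _ fun i _ => (inf'_le P ha).trans (hPa i))
      (le_inf' _ _ fun i _ => (inf'_le P hb).trans (hPb i))

end AlgebraicCoarsenings

section SortingPermutations

variable {β : Type*}

lemma comp_swap_eq_self {α : Type*} [DecidableEq α] {P : α → β} {x y : α} (h : P x = P y) :
    P ∘ swap x y = P := by
  rw [comp_swap_eq_update, h, Function.update_eq_self, ← h, Function.update_eq_self]

lemma exists_perm_monotone_comp_of_forall_le {m : ℕ} [LinearOrder β] {P : Fin (m + 1) → β}
    {a : Fin (m + 1)} (ha : ∀ i, P a ≤ P i) :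
    ∃ σ : Perm (Fin (m + 1)), Monotone (P ∘ σ) ∧ σ 0 = a := by
  have hsort := Tuple.monotone_sort P
  set τ := Tuple.sort P
  have hmin : P (τ 0) ≤ P a := by simpa using hsort (Fin.zero_le (τ.symm a))
  refine ⟨τ.trans (swap (τ 0) a), ?_, by simp⟩
  rwa [coe_trans, ← Function.comp_assoc, comp_swap_eq_self (hmin.antisymm (ha _))]

lemma exists_perm_monotone_comp_of_forall_le_of_ne {m : ℕ} [LinearOrder β] {P : Fin (m + 2) → β}
    {a b : Fin (m + 2)} (ha : ∀ i, P a ≤ P i) (hb : ∀ i, P b ≤ P i) (hab : a ≠ b) :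
    ∃ σ : Perm (Fin (m + 2)), Monotone (P ∘ σ) ∧ σ 0 = a ∧ σ 1 = b := by
  obtain ⟨τ, hτ, rfl⟩ := exists_perm_monotone_comp_of_forall_le ha
  have hb0 : τ.symm b ≠ 0 := fun h => hab (by simp [← h])
  have hmin : P (τ 1) ≤ P b := by simpa using hτ (Fin.one_le_of_ne_zero hb0)
  refine ⟨τ.trans (swap (τ 1) b), ?_, swap_apply_of_ne_of_ne (by simp) hab, by simp⟩
  rwa [coe_trans, ← Function.comp_assoc, comp_swap_eq_self (hmin.antisymm (hb _))]

lemma eq_of_monotone_symm_comp {n : ℕ} {σ τ : Perm (Fin n)} (h : Monotone (σ.symm ∘ τ)) :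
    σ = τ :=
  inv_mul_eq_one.1 ((Perm.monotone_iff (σ⁻¹ * τ)).1 h)

variable {m : ℕ} {σ τ : Perm (Fin (m + 2))}

lemma apply_zero_eq_or_of_monotone_max_one (h : Monotone ((max · 1) ∘ σ.symm ∘ τ)) :
    τ 0 = σ 0 ∨ τ 0 = σ 1 := by
  have hle : max (σ.symm (τ 0)) 1 ≤ 1 := by simpa using h (Fin.zero_le (τ.symm (σ 0)))
  simp only [← symm_apply_eq]
  exact or_iff_not_imp_left.2 fun h0 =>
    ((le_max_left _ _).trans hle).antisymm (Fin.one_le_of_ne_zero h0)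

lemma eq_of_monotone_max_one_of_apply_zero_eq (h : Monotone ((max · 1) ∘ σ.symm ∘ τ))
    (h0 : τ 0 = σ 0) : σ = τ := by
  refine eq_of_monotone_symm_comp fun i j hij => ?_
  have hpos {k : Fin (m + 2)} (hk : k ≠ 0) : 1 ≤ σ.symm (τ k) :=
    Fin.one_le_of_ne_zero (by simpa [symm_apply_eq, ← h0] using hk)
  rcases eq_or_ne i 0 with rfl | hi
  · simp [h0]
  · have hj : j ≠ 0 := (hi.bot_lt.trans_le hij).ne'
    simpa [max_eq_left, hpos hi, hpos hj] using h hij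

end SortingPermutations

section Components

variable {m l : ℕ} {A B : Finset (Fin (m + 2))}

/-- The irreducible components of `V(A, B)`, indexed by enumerations `σ` of the variables: `σ.symm`
ranks the variables linearly, and `(max · 1) ∘ σ.symm` moreover ties the first two of them. -/
def component (l : ℕ) (A B : Finset (Fin (m + 2))) :
    {σ : Perm (Fin (m + 2)) // σ 0 ∈ A ∩ B} ⊕
      {σ : Perm (Fin (m + 2)) // σ 0 ∈ A \ B ∧ σ 1 ∈ B \ A} → Set (Fin (m + 2) → Fin l) :=
  Sum.elim (fun σ => coarsenings σ.1.symm) (fun σ => coarsenings ((max · 1) ∘ σ.1.symm))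

lemma iUnion_component {hA : A.Nonempty} {hB : B.Nonempty} (hAB : A ∪ B = univ) :
    ⋃ x, component l A B x = solutionSet l A B hA hB := by
  ext P
  rw [mem_solutionSet_iff_exists_forall_le hAB]
  simp only [component, Set.iUnion_sum, Sum.elim_inl, Sum.elim_inr, Set.mem_union, Set.mem_iUnion,
    mem_coarsenings_symm_iff, mem_coarsenings_max_one_symm_iff, Subtype.exists, exists_prop,
    mem_inter, mem_sdiff]
  have hfirst {σ : Perm (Fin (m + 2))} (hσ : Monotone (P ∘ σ)) (i : Fin (m + 2)) :
      P (σ 0) ≤ P i := by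
    simpa using hσ (Fin.zero_le (σ.symm i))
  constructor
  · rintro (⟨σ, ⟨hσA, hσB⟩, hσ⟩ | ⟨σ, ⟨⟨hσA, -⟩, hσB, -⟩, hσ, htie⟩)
    · exact ⟨_, hσA, _, hσB, hfirst hσ, hfirst hσ⟩
    · exact ⟨_, hσA, _, hσB, hfirst hσ, htie ▸ hfirst hσ⟩
  · rintro ⟨a, haA, b, hbB, ha, hb⟩
    by_cases hcommon : ∃ c ∈ A ∩ B, ∀ i, P c ≤ P i
    · obtain ⟨c, hc, hmin⟩ := hcommon
      obtain ⟨σ, hσ, rfl⟩ := exists_perm_monotone_comp_of_forall_le hmin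
      exact .inl ⟨σ, mem_inter.1 hc, hσ⟩
    · have haB : a ∉ B := fun h => hcommon ⟨a, mem_inter.2 ⟨haA, h⟩, ha⟩
      have hbA : b ∉ A := fun h => hcommon ⟨b, mem_inter.2 ⟨h, hbB⟩, hb⟩
      obtain ⟨σ, hσ, rfl, rfl⟩ :=
        exists_perm_monotone_comp_of_forall_le_of_ne ha hb (ne_of_mem_of_not_mem haA hbA)
      exact .inr ⟨σ, ⟨⟨haA, haB⟩, hbB, hbA⟩, hσ, (ha _).antisymm (hb _)⟩

lemma eq_of_component_subset (hl : m + 2 ≤ l) {x y} (h : component l A B x ⊆ component l A B y) :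
    x = y := by
  have e : Fin (m + 2) ↪o Fin l := Fin.castLEOrderEmb hl
  rcases x with ⟨σ, hσ⟩ | ⟨σ, hσ⟩ <;> rcases y with ⟨τ, hτ⟩ | ⟨τ, hτ⟩ <;>
    simp only [component, Sum.elim_inl, Sum.elim_inr, coarsenings_subset_coarsenings_iff e,
      mem_coarsenings_symm_iff, mem_coarsenings_max_one_symm_iff, Function.comp_assoc] at h
  · obtain rfl := eq_of_monotone_symm_comp h
    rfl
  · exact absurd h.2 (by simp)
  · simp only [mem_inter, mem_sdiff] at hσ hτ
    rcases apply_zero_eq_or_of_monotone_max_one h with h0 | h0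
    · exact absurd (h0 ▸ hτ.2) hσ.1.2
    · exact absurd (h0 ▸ hτ.1) hσ.2.2
  · have h0 : τ 0 = σ 0 := by
      refine (apply_zero_eq_or_of_monotone_max_one h.1).resolve_right fun h0 => ?_
      exact (mem_sdiff.1 hσ.2).2 (h0 ▸ (mem_sdiff.1 hτ.1).1)
    obtain rfl := eq_of_monotone_max_one_of_apply_zero_eq h.1 h0
    rfl

theorem isIrreducibleDecomposition_component (hl : m + 2 ≤ l) {hA : A.Nonempty} {hB : B.Nonempty}
    (hAB : A ∪ B = univ) :
    IsIrreducibleDecomposition (component l A B) (solutionSet l A B hA hB) where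
  isAlgebraicSet := by rintro (σ | σ) <;> exact isAlgebraicSet_coarsenings _
  isIrreducibleAlg := by
    rintro (σ | σ) <;> exact isIrreducibleAlg_coarsenings (Fin.castLEOrderEmb hl) _
  not_subset _ _ hne h := hne (eq_of_component_subset hl h)
  iUnion_eq := iUnion_component hAB

theorem IsIrreducibleDecomposition.natCard_eq_of_solutionSet {ι : Type*} [Finite ι]
    {Y : ι → Set (Fin (m + 2) → Fin l)} {hA : A.Nonempty} {hB : B.Nonempty}
    (hY : IsIrreducibleDecomposition Y (solutionSet l A B hA hB)) (hl : m + 2 ≤ l)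
    (hAB : A ∪ B = univ) :
    Nat.card ι = #{σ : Perm (Fin (m + 2)) | σ 0 ∈ A ∩ B} +
      #{σ : Perm (Fin (m + 2)) | σ 0 ∈ A \ B ∧ σ 1 ∈ B \ A} := by
  rw [hY.natCard_eq (isIrreducibleDecomposition_component hl hAB), Nat.card_sum,
    Nat.card_eq_fintype_card, Nat.card_eq_fintype_card, Fintype.card_subtype, Fintype.card_subtype]

end Components

section CountingEquations

lemma card_filter_forall_decide_mem {α : Type*} [Fintype α] [DecidableEq α]
    (S : α → Finset (Bool × Bool)) :
    #{p : Finset α × Finset α | ∀ i, (decide (i ∈ p.1), decide (i ∈ p.2)) ∈ S i} =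
      ∏ i, #(S i) := by
  rw [← Fintype.card_piFinset]
  refine card_nbij' (fun p i => (decide (i ∈ p.1), decide (i ∈ p.2)))
    (fun f => (({i | (f i).1} : Finset α), ({i | (f i).2} : Finset α))) ?_ ?_ ?_ ?_
  · simp [Set.MapsTo]
  · simp [Set.MapsTo]
  · simp [Set.LeftInvOn]
  · simp [Set.LeftInvOn, Set.RightInvOn]

-- An element outside `s` is free to lie in the first set only, in the second only, or in both.
lemma card_covering_pairs_of_prescribed {α : Type*} [Fintype α] [DecidableEq α] {s C D : Finset α}
    (hs : s ⊆ C ∪ D) :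
    #{p : Finset α × Finset α | p.1 ∪ p.2 = univ ∧
      ∀ i ∈ s, (i ∈ p.1 ↔ i ∈ C) ∧ (i ∈ p.2 ↔ i ∈ D)} = 3 ^ #sᶜ := by
  let S (i : α) : Finset (Bool × Bool) :=
    if i ∈ s then {(decide (i ∈ C), decide (i ∈ D))} else {(false, false)}ᶜ
  have hS (p : Finset α × Finset α) :
      (p.1 ∪ p.2 = univ ∧ ∀ i ∈ s, (i ∈ p.1 ↔ i ∈ C) ∧ (i ∈ p.2 ↔ i ∈ D)) ↔
        ∀ i, (decide (i ∈ p.1), decide (i ∈ p.2)) ∈ S i := by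
    rw [eq_univ_iff_forall, ← forall_and]
    refine forall_congr' fun i => ?_
    by_cases hi : i ∈ s
    · have hCD : i ∈ C ∨ i ∈ D := mem_union.1 (hs hi)
      simp only [S, hi, if_true, mem_union, mem_singleton, Prod.mk.injEq, decide_eq_decide]
      tauto
    · simp [S, hi, or_iff_not_imp_left]
  have hcard (i : α) : #(S i) = if i ∈ s then 1 else 3 := by
    simp only [S]
    split_ifs <;> rfl
  simp_rw [hS, card_filter_forall_decide_mem, hcard, prod_ite, prod_const_one, one_mul, prod_const,
    filter_notMem_eq_sdiff, compl_eq_univ_sdiff]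

lemma card_equationsFinset_add_two {n : ℕ} (hn : n ≠ 0) : #(equationsFinset n) + 2 = 3 ^ n := by
  have : NeZero n := ⟨hn⟩
  have hne : (univ : Finset (Fin n)) ≠ ∅ := univ_nonempty.ne_empty
  let covering : Finset (Finset (Fin n) × Finset (Fin n)) := {p | p.1 ∪ p.2 = univ}
  have hcovering : #covering = 3 ^ n := by
    simpa using card_covering_pairs_of_prescribed (empty_subset ((∅ : Finset (Fin n)) ∪ ∅))
  have hdiff : equationsFinset n = covering \ {(∅, univ), (univ, ∅)} := by
    ext ⟨A, B⟩
    rcases A.eq_empty_or_nonempty with rfl | hA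
    · simp +contextual [equationsFinset, covering]
    rcases B.eq_empty_or_nonempty with rfl | hB
    · simp +contextual [equationsFinset, covering]
    · simp [equationsFinset, covering, hA, hB, hA.ne_empty, hB.ne_empty]
  have hsub : {(∅, univ), (univ, ∅)} ⊆ covering := by simp [covering, insert_subset_iff]
  rw [← hcovering, ← card_sdiff_add_card_eq_card hsub, hdiff, card_pair (by simp [hne.symm])]

variable {n : ℕ} {a b : Fin n}

lemma card_equationsFinset_filter_mem_inter :
    #{p ∈ equationsFinset n | a ∈ p.1 ∩ p.2} = 3 ^ (n - 1) := by
  have hcount := card_covering_pairs_of_prescribed (s := {a}) (C := {a}) (D := {a})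
    subset_union_left
  rw [card_compl, card_singleton, Fintype.card_fin] at hcount
  rw [← hcount, equationsFinset, filter_filter]
  congr 1
  ext ⟨A, B⟩
  simp only [mem_filter_univ, mem_inter, mem_singleton, forall_eq, iff_true]
  exact ⟨fun h => ⟨h.1.2.2, h.2⟩, fun h => ⟨⟨⟨a, h.2.1⟩, ⟨a, h.2.2⟩, h.1⟩, h.2⟩⟩

lemma card_equationsFinset_filter_mem_sdiff (hab : a ≠ b) :
    #{p ∈ equationsFinset n | a ∈ p.1 \ p.2 ∧ b ∈ p.2 \ p.1} = 3 ^ (n - 2) := by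
  have hcount := card_covering_pairs_of_prescribed (s := {a, b}) (C := {a}) (D := {b}) subset_rfl
  rw [card_compl, card_pair hab, Fintype.card_fin] at hcount
  rw [← hcount, equationsFinset, filter_filter]
  congr 1
  ext ⟨A, B⟩
  simp only [mem_filter_univ, mem_sdiff, mem_insert, mem_singleton, forall_eq_or_imp, forall_eq,
    iff_true, iff_false, hab, hab.symm]
  exact ⟨fun h => ⟨h.1.2.2, h.2.1, h.2.2.2, h.2.2.1⟩,
    fun h => ⟨⟨⟨a, h.2.1.1⟩, ⟨b, h.2.2.2⟩, h.1⟩, h.2.1, h.2.2.2, h.2.2.1⟩⟩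

theorem sum_card_perms_equationsFinset (m : ℕ) :
    ∑ p ∈ equationsFinset (m + 2), (#{σ : Perm (Fin (m + 2)) | σ 0 ∈ p.1 ∩ p.2} +
      #{σ : Perm (Fin (m + 2)) | σ 0 ∈ p.1 \ p.2 ∧ σ 1 ∈ p.2 \ p.1}) =
      4 * (m + 2).factorial * 3 ^ m := by
  have hcommon := sum_card_bipartiteAbove_eq_sum_card_bipartiteBelow (s := equationsFinset (m + 2))
    (t := univ) fun p (σ : Perm (Fin (m + 2))) => σ 0 ∈ p.1 ∩ p.2
  have htied := sum_card_bipartiteAbove_eq_sum_card_bipartiteBelow (s := equationsFinset (m + 2))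
    (t := univ) fun p (σ : Perm (Fin (m + 2))) => σ 0 ∈ p.1 \ p.2 ∧ σ 1 ∈ p.2 \ p.1
  have hne (σ : Perm (Fin (m + 2))) : σ 0 ≠ σ 1 := by simp
  simp only [bipartiteAbove, bipartiteBelow, card_equationsFinset_filter_mem_inter,
    card_equationsFinset_filter_mem_sdiff (hne _), sum_const, card_univ, Fintype.card_perm,
    Fintype.card_fin, smul_eq_mul] at hcommon htied
  rw [sum_add_distrib, hcommon, htied, Nat.add_sub_cancel, show m + 2 - 1 = m + 1 from rfl]
  ring

end CountingEquations

/-- Let 2 ≤ n ≤ l. For each pair (A, B) of nonempty subsets of `Fin n` with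
`A ∪ B = Fin n`, let `Irr A B` denote the number of irreducible components of the solution
set `V(A,B) ⊆ (Fin n → Fin l)`, i.e. the number m of irreducible algebraic sets
Y₁, …, Yₘ, pairwise not contained in one another, whose union is `V(A,B)`. Then the sum of
`Irr A B` over all such pairs (A, B) equals `4 · n! · 3^{n−2}`; consequently, since there
are exactly `3^n − 2` such pairs, the average number of irreducible components over all
equations in n variables is `4 · n! · 3^{n−2} / (3^n − 2)`, independently of l. -/
theorem stmt_19 (n l : ℕ) (hn : 2 ≤ n) (hnl : n ≤ l)
    (Irr : Finset (Fin n) → Finset (Fin n) → ℕ)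
    (hIrr : ∀ A B : Finset (Fin n), ∀ (hA : A.Nonempty) (hB : B.Nonempty),
      A ∪ B = Finset.univ →
      ∃ Y : Fin (Irr A B) → Set (Fin n → Fin l),
        (∀ i, IsAlgebraicSet n l (Y i) ∧ IsIrreducibleAlg n l (Y i)) ∧
        (∀ i j, i ≠ j → ¬ Y i ⊆ Y j) ∧
        (⋃ i, Y i) = solutionSet l A B hA hB) :
    (∑ p ∈ equationsFinset n, Irr p.1 p.2) = 4 * n.factorial * 3 ^ (n - 2) ∧
    ((∑ p ∈ equationsFinset n, Irr p.1 p.2 : ℕ) : ℚ) / ((equationsFinset n).card : ℚ)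
      = (4 * n.factorial * 3 ^ (n - 2) : ℚ) / ((3 : ℚ) ^ n - 2) := by
  have hsum : ∑ p ∈ equationsFinset n, Irr p.1 p.2 = 4 * n.factorial * 3 ^ (n - 2) := by
    obtain ⟨m, rfl⟩ := Nat.exists_eq_add_of_le' hn
    rw [Nat.add_sub_cancel, ← sum_card_perms_equationsFinset]
    refine sum_congr rfl fun p hp => ?_
    obtain ⟨hA, hB, hAB⟩ := (mem_filter.1 hp).2
    obtain ⟨Y, hY, hne, hunion⟩ := hIrr p.1 p.2 hA hB hAB
    have hdec : IsIrreducibleDecomposition Y (solutionSet l p.1 p.2 hA hB) :=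
      ⟨fun i => (hY i).1, fun i => (hY i).2, hne, hunion⟩
    rw [← hdec.natCard_eq_of_solutionSet hnl hAB, Nat.card_fin]
  have hcard : (#(equationsFinset n) : ℚ) = 3 ^ n - 2 :=
    eq_sub_of_add_eq (mod_cast card_equationsFinset_add_two (by omega))
  refine ⟨hsum, ?_⟩
  rw [hsum, hcard]
  push_cast
  rfl
end
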